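/- Let d ≥ 3 and let k be an integer with d/2 < k < d, and p, q ∈ ℝ. The map L^{(d)}_{p,q} is k-positive if and only if p − (d−1)q ≤ 1, p + (d+1)q ≤ 1, (kd−1)p + (d−1)q ≥ −1, and f_k(p,q) ≤ 0, where f_k(x,y) = (kd−1)x² − (d³ − kd² − kd − d + 2)xy + (d−1)y² − (kd−2)x − (d−2)y − 1. -/

import Mathlib

open Matrix
open scoped ComplexOrder

noncomputable section

/-- The ampliation `id_{M_k} ⊗ L` of a map `L` applied to a bipartite matrix, blockwise. -/
def idTensor {k m n : ℕ} (L : Matrix (Fin m) (Fin m) ℂ →ₗ[ℂ] Matrix (Fin n) (Fin n) ℂ)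
    (X : Matrix (Fin k × Fin m) (Fin k × Fin m) ℂ) : Matrix (Fin k × Fin n) (Fin k × Fin n) ℂ :=
  Matrix.of fun p q => L (Matrix.of fun a b => X (p.1, a) (q.1, b)) p.2 q.2

/-- `L` is `k`-positive if `id_{M_k} ⊗ L` sends positive semidefinite matrices to positive
semidefinite matrices. -/
def IsKPositive {m n : ℕ} (k : ℕ)
    (L : Matrix (Fin m) (Fin m) ℂ →ₗ[ℂ] Matrix (Fin n) (Fin n) ℂ) : Prop :=
  ∀ X : Matrix (Fin k × Fin m) (Fin k × Fin m) ℂ, X.PosSemidef → (idTensor L X).PosSemidef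

/-- The linear map `L^{(d)}_{p,q}(Z) = (1-p-q) (Tr Z / d) I_d + p Z + q Zᵀ`. -/
def Lmap (d : ℕ) (p q : ℝ) :
    Matrix (Fin d) (Fin d) ℂ →ₗ[ℂ] Matrix (Fin d) (Fin d) ℂ :=
  ((((1 - p - q : ℝ) : ℂ) / (d : ℂ)) •
      (Matrix.traceLinearMap (Fin d) ℂ ℂ).smulRight (1 : Matrix (Fin d) (Fin d) ℂ))
    + ((p : ℝ) : ℂ) • LinearMap.id
    + ((q : ℝ) : ℂ) • (Matrix.transposeLinearEquiv (Fin d) (Fin d) ℂ ℂ).toLinearMap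

/-- The maximally entangled vector `|Ω_d⟩ = (1/√d) ∑_j |jj⟩`. -/
def omegaVec (d : ℕ) : Fin d × Fin d → ℂ :=
  fun p => if p.1 = p.2 then ((1 / Real.sqrt d : ℝ) : ℂ) else 0

/-- The flip operator `F_d = ∑_{i,j} |ij⟩⟨ji|`. -/
def flipMatrix (d : ℕ) : Matrix (Fin d × Fin d) (Fin d × Fin d) ℂ :=
  Matrix.of fun p q => if p.1 = q.2 ∧ p.2 = q.1 then 1 else 0

/-- The orthogonally invariant operators
`ρ^{(d)}_{a,b} = ((1-a-b)/d²) I + a |Ω_d⟩⟨Ω_d| + (b/d) F_d`. -/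
def rho (d : ℕ) (a b : ℝ) : Matrix (Fin d × Fin d) (Fin d × Fin d) ℂ :=
  ((((1 - a - b : ℝ) : ℂ) / ((d : ℂ) ^ 2)) • (1 : Matrix (Fin d × Fin d) (Fin d × Fin d) ℂ))
    + (((a : ℝ) : ℂ) • Matrix.vecMulVec (omegaVec d) (star (omegaVec d)))
    + ((((b : ℝ) : ℂ) / (d : ℂ)) • flipMatrix d)

/-- `Sch_k`: finite sums of rank-one operators `|ξ⟩⟨ξ|` with Schmidt rank `SR(ξ) ≤ k`,
where `SR(ξ)` is the rank of the `d_A × d_B` coefficient matrix of `ξ ∈ ℂ^{d_A} ⊗ ℂ^{d_B}`. -/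
def SchmidtSet (dA dB k : ℕ) : Set (Matrix (Fin dA × Fin dB) (Fin dA × Fin dB) ℂ) :=
  {X | ∃ (N : ℕ) (ξ : Fin N → (Fin dA × Fin dB → ℂ)),
    (∀ i, (Matrix.of fun a b => ξ i (a, b)).rank ≤ k) ∧
    X = ∑ i, Matrix.vecMulVec (ξ i) (star (ξ i))}

/-!
After vectorization, `k`-positivity of `L` says that the Hermitian form of its Choi matrix is
nonnegative on matrices `M` of rank at most `k`. For `Lmap` this form is
`⟨M, cM + qMᵀ⟩ + p |tr M|²` with `c = (1 - p - q)/d`, so only `p < 0` is delicate, and there one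
needs the best constant `C` in `|tr M|² ≤ C ⟨M, cM + qMᵀ⟩` for `M` of rank at most `k`.

If `P` is the orthogonal projection onto the range of `M`, the trace on `{M | PM = M}` is
represented, for the form `⟨X, cY + qYᵀ⟩`, by `((c + q)P - qPPᵀ)/(c(c + q))`. By Cauchy–Schwarz,
`C` is the largest possible trace of this matrix, which for `q ≥ 0` is governed by
`tr (PPᵀ) ≥ 2 rank P - d`. Equality means `(1 - P)(1 - P)ᵀ = 0`: the complement of the range is
spanned by isotropic vectors such as `e_j + i f_j`, for which there is room at rank `k` exactly
when `d ≤ 2k`. The resulting boundary is the curve `f_k = 0`. For `q ≤ 0` the extremal `P` are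
real, and the condition is the linear inequality `(kd - 1)p + (d - 1)q ≥ -1`.
-/

open scoped Kronecker

section RankAndProjections

variable {𝕜 m n : Type*} [Fintype n]

lemma rank_le_iff_exists_eq_mul [Field 𝕜] {k : ℕ} {M : Matrix m n 𝕜} :
    M.rank ≤ k ↔ ∃ (B : Matrix m (Fin k) 𝕜) (C : Matrix (Fin k) n 𝕜), M = B * C := by
  classical
  constructor
  · intro hM
    have hdim : Module.finrank 𝕜 (LinearMap.range M.mulVecLin) ≤ Module.finrank 𝕜 (Fin k → 𝕜) := by
      simpa [Matrix.rank] using hM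
    obtain ⟨f, hf⟩ := finrank_le_iff_exists_linearMap.1 hdim
    obtain ⟨g, hgf⟩ := f.exists_leftInverse_of_injective (LinearMap.ker_eq_bot.2 hf)
    refine ⟨LinearMap.toMatrix' ((LinearMap.range M.mulVecLin).subtype ∘ₗ g),
      LinearMap.toMatrix' (f ∘ₗ M.mulVecLin.rangeRestrict), ?_⟩
    have hcomp : ((LinearMap.range M.mulVecLin).subtype ∘ₗ g) ∘ₗ (f ∘ₗ M.mulVecLin.rangeRestrict) =
        M.mulVecLin := by
      rw [LinearMap.comp_assoc, ← LinearMap.comp_assoc _ f g, hgf, LinearMap.id_comp,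
        LinearMap.subtype_comp_codRestrict]
    rw [← LinearMap.toMatrix'_comp, hcomp]
    exact (LinearMap.toMatrix'_toLin' M).symm
  · rintro ⟨B, C, rfl⟩
    exact (rank_mul_le_left B C).trans (B.rank_le_card_width.trans_eq (Fintype.card_fin k))

lemma trace_eq_rank_of_isIdempotentElem [Field 𝕜] {P : Matrix n n 𝕜} (hP : IsIdempotentElem P) :
    P.trace = P.rank := by
  classical
  have hlin : IsIdempotentElem (Matrix.toLin' P) := by
    rw [IsIdempotentElem, Module.End.mul_eq_comp, ← Matrix.toLin'_mul, hP.eq]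
  rw [← Matrix.trace_toLin'_eq, (LinearMap.IsIdempotentElem.isProj_range _ hlin).trace]
  rfl

lemma exists_isStarProjection_mul_eq_self [RCLike 𝕜] [Fintype m] (M : Matrix m n 𝕜) :
    ∃ P : Matrix m m 𝕜, IsStarProjection P ∧ P * M = M ∧ P.rank = M.rank := by
  classical
  let U := LinearMap.range (toEuclideanLin M)
  let P : Matrix m m 𝕜 := (toEuclideanCLM (n := m) (𝕜 := 𝕜)).symm U.starProjection
  have hP : toEuclideanLin P = U.starProjection.toLinearMap := by
    rw [← coe_toEuclideanCLM_eq_toEuclideanLin, StarAlgEquiv.apply_symm_apply]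
  have hproj : IsStarProjection P := by
    have hU : IsStarProjection U.starProjection := isStarProjection_starProjection
    exact ⟨hU.isIdempotentElem.map _, hU.isSelfAdjoint.map
      ((toEuclideanCLM (n := m) (𝕜 := 𝕜)).symm : _ ≃⋆ₐ[𝕜] _)⟩
  refine ⟨P, hproj, ?_, ?_⟩
  · refine toEuclideanLin.injective (LinearMap.ext fun x => ?_)
    have hx := U.starProjection_eq_self_iff.2 (LinearMap.mem_range_self _ x)
    calc toEuclideanLin (P * M) x = toEuclideanLin P (toEuclideanLin M x) := by simp
      _ = toEuclideanLin M x := by rw [hP]; exact hx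
  · rw [rank_eq_finrank_range_toLin P (EuclideanSpace.basisFun m 𝕜).toBasis
        (EuclideanSpace.basisFun m 𝕜).toBasis,
      rank_eq_finrank_range_toLin M (EuclideanSpace.basisFun m 𝕜).toBasis
        (EuclideanSpace.basisFun n 𝕜).toBasis, ← toEuclideanLin_eq_toLin_orthonormal,
        ← toEuclideanLin_eq_toLin_orthonormal, hP]
    exact congrArg (fun V : Submodule 𝕜 _ => Module.finrank 𝕜 V) U.range_starProjection

lemma posSemidef_of_forall_dotProduct_mulVec_nonneg {A : Matrix n n ℂ}
    (hA : ∀ x, 0 ≤ star x ⬝ᵥ (A *ᵥ x)) : A.PosSemidef := by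
  classical
  rw [← isPositive_toEuclideanLin_iff, LinearMap.isPositive_iff_complex]
  intro x
  have hreal : star (star x.ofLp ⬝ᵥ (A *ᵥ x.ofLp)) = star x.ofLp ⬝ᵥ (A *ᵥ x.ofLp) :=
    (IsSelfAdjoint.of_nonneg (hA x.ofLp)).star_eq
  have hinner : inner ℂ (toEuclideanLin A x) x = star x.ofLp ⬝ᵥ (A *ᵥ x.ofLp) := by
    rw [← hreal, ← star_dotProduct_star, star_star, EuclideanSpace.inner_eq_star_dotProduct]
    exact dotProduct_comm _ _
  rw [hinner]
  exact ⟨RCLike.conj_eq_iff_re.1 hreal, (RCLike.nonneg_iff.1 (hA x.ofLp)).1⟩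

lemma rank_single_add_single_le [Field 𝕜] [DecidableEq n] (a b : n) (x y : 𝕜) :
    (single a b x + single b a y).rank ≤ 2 := by
  refine (rank_le_card_of_support_subset _ {a, b} fun i hi => ?_).trans Finset.card_le_two
  contrapose! hi
  obtain ⟨hia, hib⟩ : i ≠ a ∧ i ≠ b := by simpa using hi
  rw [Function.notMem_support]
  ext j
  simp [hia.symm, hib.symm]

end RankAndProjections

section Choi

variable {k m n : ℕ} (L : Matrix (Fin m) (Fin m) ℂ →ₗ[ℂ] Matrix (Fin n) (Fin n) ℂ)

/-- The Choi matrix `∑ e f, E_ef ⊗ L(E_ef)` of `L`, up to normalization; the first factor is the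
input space. -/
def choiMatrix : Matrix (Fin m × Fin n) (Fin m × Fin n) ℂ :=
  Matrix.of fun x y => L (Matrix.single x.1 y.1 1) x.2 y.2

lemma idTensor_sum {ι : Type*} (s : Finset ι)
    (X : ι → Matrix (Fin k × Fin m) (Fin k × Fin m) ℂ) :
    idTensor L (∑ i ∈ s, X i) = ∑ i ∈ s, idTensor L (X i) := by
  ext x y
  have hblock : (Matrix.of fun a b => (∑ i ∈ s, X i) (x.1, a) (y.1, b)) =
      ∑ i ∈ s, Matrix.of fun a b => X i (x.1, a) (y.1, b) := by
    ext a b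
    simp only [Matrix.of_apply, Matrix.sum_apply]
  rw [Matrix.sum_apply]
  simp only [idTensor, Matrix.of_apply]
  rw [hblock, map_sum, Matrix.sum_apply]

lemma map_apply_eq_sum_choiMatrix (Z : Matrix (Fin m) (Fin m) ℂ) (a b : Fin n) :
    L Z a b = ∑ e, ∑ f, Z e f * choiMatrix L (e, a) (f, b) := by
  conv_lhs => rw [matrix_eq_sum_single Z]
  simp only [map_sum, Matrix.sum_apply, choiMatrix, Matrix.of_apply]
  refine Finset.sum_congr rfl fun e _ => Finset.sum_congr rfl fun f _ => ?_
  rw [← mul_one (Z e f), ← smul_eq_mul, ← smul_single, map_smul]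
  simp

lemma idTensor_vecMulVec_vec (A : Matrix (Fin m) (Fin k) ℂ) :
    idTensor L (vecMulVec (vec A) (star (vec A))) =
      (Aᵀ ⊗ₖ (1 : Matrix (Fin n) (Fin n) ℂ)) * choiMatrix L *
        (Aᵀ ⊗ₖ (1 : Matrix (Fin n) (Fin n) ℂ))ᴴ := by
  ext ⟨i, a⟩ ⟨j, b⟩
  simp only [idTensor, Matrix.of_apply, map_apply_eq_sum_choiMatrix, Matrix.mul_apply,
    Fintype.sum_prod_type, kroneckerMap_apply, conjTranspose_apply, transpose_apply,
    vecMulVec_apply, vec, Pi.star_apply, Matrix.one_apply]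
  simp only [mul_ite, ite_mul, mul_one, mul_zero, zero_mul, apply_ite star, star_zero,
    Finset.sum_ite_eq, Finset.mem_univ, if_true, Finset.sum_mul]
  rw [Finset.sum_comm]
  refine Finset.sum_congr rfl fun e _ => Finset.sum_congr rfl fun f _ => ?_
  ring

lemma dotProduct_idTensor_vecMulVec_vec (A : Matrix (Fin m) (Fin k) ℂ)
    (B : Matrix (Fin n) (Fin k) ℂ) :
    star (vec B) ⬝ᵥ (idTensor L (vecMulVec (vec A) (star (vec A))) *ᵥ vec B) =
      star (vec (B * Aᴴ)) ⬝ᵥ (choiMatrix L *ᵥ vec (B * Aᴴ)) := by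
  have hslice : (Aᵀ ⊗ₖ (1 : Matrix (Fin n) (Fin n) ℂ))ᴴ *ᵥ vec B = vec (B * Aᴴ) := by
    rw [conjTranspose_kronecker, conjTranspose_one, kronecker_mulVec_vec, Matrix.one_mul]
    rfl
  rw [idTensor_vecMulVec_vec, ← hslice, star_mulVec, conjTranspose_conjTranspose,
    ← dotProduct_mulVec, mulVec_mulVec, mulVec_mulVec]

theorem isKPositive_iff_choiMatrix :
    IsKPositive k L ↔ ∀ M : Matrix (Fin n) (Fin m) ℂ, M.rank ≤ k →
      0 ≤ star (vec M) ⬝ᵥ (choiMatrix L *ᵥ vec M) := by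
  constructor
  · intro hL M hM
    obtain ⟨B, C, rfl⟩ := rank_le_iff_exists_eq_mul.1 hM
    rw [← conjTranspose_conjTranspose C, ← dotProduct_idTensor_vecMulVec_vec]
    exact (hL _ (posSemidef_vecMulVec_self_star _)).dotProduct_mulVec_nonneg _
  · intro hL X hX
    obtain ⟨N, v, rfl⟩ := posSemidef_iff_eq_sum_vecMulVec.1 hX
    rw [idTensor_sum]
    refine posSemidef_sum _ fun i _ => posSemidef_of_forall_dotProduct_mulVec_nonneg fun x => ?_
    obtain ⟨A, hA⟩ := vec_bijective.surjective (v i)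
    obtain ⟨B, rfl⟩ := vec_bijective.surjective x
    rw [← hA, dotProduct_idTensor_vecMulVec_vec]
    exact hL _ (rank_le_iff_exists_eq_mul.2 ⟨B, Aᴴ, rfl⟩)

end Choi

section TransposeForm

variable {ι : Type*} [Fintype ι] {c q : ℝ} {k : ℕ}

/-- The Hilbert–Schmidt pairing `⟨X, cY + qYᵀ⟩`: the Choi form of `Lmap` without its trace term. -/
def transposeForm (c q : ℝ) (X Y : Matrix ι ι ℂ) : ℂ :=
  (Xᴴ * ((c : ℂ) • Y + (q : ℂ) • Yᵀ)).trace

lemma transposeForm_eq (c q : ℝ) (X Y : Matrix ι ι ℂ) :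
    transposeForm c q X Y = c * (Xᴴ * Y).trace + q * (Xᴴ * Yᵀ).trace := by
  simp only [transposeForm, Matrix.mul_add, Matrix.mul_smul, trace_add, trace_smul, smul_eq_mul]

lemma star_transposeForm (c q : ℝ) (X Y : Matrix ι ι ℂ) :
    star (transposeForm c q X Y) = transposeForm c q Y X := by
  have hswap : star (Xᴴ * Yᵀ).trace = (Yᴴ * Xᵀ).trace := by
    rw [← trace_conjTranspose, conjTranspose_mul, conjTranspose_conjTranspose, ← trace_transpose,
      transpose_mul, trace_mul_comm]
    rfl
  have hself : star (Xᴴ * Y).trace = (Yᴴ * X).trace := by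
    rw [← trace_conjTranspose, conjTranspose_mul, conjTranspose_conjTranspose]
  simp only [transposeForm_eq, star_add, star_mul', hswap, hself]
  simp

lemma transposeForm_self_nonneg (hadd : 0 ≤ c + q) (hsub : 0 ≤ c - q) (X : Matrix ι ι ℂ) :
    0 ≤ transposeForm c q X X := by
  have hgram (Y : Matrix ι ι ℂ) : 0 ≤ (Yᴴ * Y).trace :=
    (posSemidef_conjTranspose_mul_self Y).trace_nonneg
  have hdecomp : transposeForm c q X X =
      ((c + q) / 4 : ℝ) * ((X + Xᵀ)ᴴ * (X + Xᵀ)).trace +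
        ((c - q) / 4 : ℝ) * ((X - Xᵀ)ᴴ * (X - Xᵀ)).trace := by
    have hself : (Xᵀᴴ * Xᵀ).trace = (Xᴴ * X).trace := by
      rw [← trace_transpose, transpose_mul, transpose_transpose, trace_mul_comm]
      rfl
    have hswap : (Xᵀᴴ * X).trace = (Xᴴ * Xᵀ).trace := by
      rw [← trace_transpose, transpose_mul, trace_mul_comm]
      rfl
    simp only [transposeForm_eq, conjTranspose_add, conjTranspose_sub, Matrix.add_mul,
      Matrix.sub_mul, Matrix.mul_add, Matrix.mul_sub, trace_add, trace_sub, hself, hswap]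
    push_cast
    ring
  rw [hdecomp]
  exact add_nonneg (mul_nonneg (Complex.zero_le_real.2 (by positivity)) (hgram _))
    (mul_nonneg (Complex.zero_le_real.2 (by positivity)) (hgram _))

lemma norm_transposeForm_sq_le (hadd : 0 ≤ c + q) (hsub : 0 ≤ c - q) (X Y : Matrix ι ι ℂ) :
    ‖transposeForm c q X Y‖ ^ 2 ≤ (transposeForm c q X X).re * (transposeForm c q Y Y).re := by
  let core : PreInnerProductSpace.Core ℂ (Matrix ι ι ℂ) :=
    { inner := transposeForm c q
      conj_inner_symm := fun X Y => star_transposeForm c q Y X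
      re_inner_nonneg := fun X =>
        (RCLike.nonneg_iff.1 (transposeForm_self_nonneg hadd hsub X)).1
      add_left := fun X Y Z => by
        simp only [transposeForm, conjTranspose_add, Matrix.add_mul, trace_add]
      smul_left := fun X Y r => by
        simp only [transposeForm, conjTranspose_smul, Matrix.smul_mul, trace_smul, smul_eq_mul]
        rfl }
  have hcs : ‖transposeForm c q X Y‖ * ‖transposeForm c q Y X‖ ≤
      (transposeForm c q X X).re * (transposeForm c q Y Y).re :=
    @InnerProductSpace.Core.inner_mul_inner_self_le ℂ _ _ _ _ core X Y
  rwa [← star_transposeForm c q X Y, norm_star, ← sq] at hcs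

lemma conjTranspose_mul_transpose_self {P : Matrix ι ι ℂ} (hP : IsSelfAdjoint P) :
    (P * Pᵀ)ᴴ = Pᵀ * P := by
  have hherm : Pᴴ = P := hP
  have htranspose : Pᵀᴴ = Pᵀ := congrArg transpose hherm
  rw [conjTranspose_mul, hherm, htranspose]

lemma trace_mul_transpose_nonneg {P : Matrix ι ι ℂ} (hP : IsStarProjection P) :
    0 ≤ (P * Pᵀ).trace := by
  have hidem : P * P = P := hP.isIdempotentElem
  have hidemT : Pᵀ * Pᵀ = Pᵀ := by rw [← transpose_mul, hidem]
  have hgram : (P * Pᵀ).trace = ((P * Pᵀ)ᴴ * (P * Pᵀ)).trace := by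
    calc (P * Pᵀ).trace = (P * (Pᵀ * Pᵀ)).trace := by rw [hidemT]
      _ = (Pᵀ * (P * P * Pᵀ)).trace := by rw [trace_mul_comm Pᵀ, hidem, Matrix.mul_assoc]
      _ = ((P * Pᵀ)ᴴ * (P * Pᵀ)).trace := by
        rw [conjTranspose_mul_transpose_self hP.isSelfAdjoint]
        simp only [Matrix.mul_assoc]
  rw [hgram]
  exact (posSemidef_conjTranspose_mul_self _).trace_nonneg

lemma trace_one_sub_mul_transpose [DecidableEq ι] (P : Matrix ι ι ℂ) :
    ((1 - P) * (1 - P)ᵀ).trace = Fintype.card ι - 2 * P.trace + (P * Pᵀ).trace := by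
  simp only [transpose_sub, transpose_one, Matrix.sub_mul, Matrix.mul_sub, Matrix.one_mul,
    Matrix.mul_one, trace_sub, trace_one, trace_transpose]
  ring

/-- For a star projection `P`, the multiple by `c (c + q)` of the Riesz representer of the trace
with respect to `transposeForm c q` on the space of matrices fixed by `P` on the left. -/
def traceRepresenter (c q : ℝ) (P : Matrix ι ι ℂ) : Matrix ι ι ℂ :=
  ((c + q : ℝ) : ℂ) • P - (q : ℂ) • (P * Pᵀ)

lemma mul_traceRepresenter {P : Matrix ι ι ℂ} (hP : IsIdempotentElem P) :
    P * traceRepresenter c q P = traceRepresenter c q P := by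
  rw [traceRepresenter, Matrix.mul_sub, Matrix.mul_smul, Matrix.mul_smul, ← Matrix.mul_assoc, hP.eq]

lemma transposeForm_traceRepresenter {P M : Matrix ι ι ℂ} (hP : IsSelfAdjoint P)
    (hPM : P * M = M) :
    transposeForm c q (traceRepresenter c q P) M = c * (c + q) * M.trace := by
  have hherm : Pᴴ = P := hP
  have hMP : Mᵀ * Pᵀ = Mᵀ := by rw [← transpose_mul, hPM]
  have htr : (P * Mᵀ).trace = (Pᵀ * M).trace := by
    rw [← trace_transpose, transpose_mul, transpose_transpose, trace_mul_comm]
  have htr' : (Pᵀ * P * Mᵀ).trace = (Pᵀ * M).trace := by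
    rw [Matrix.mul_assoc, trace_mul_comm, Matrix.mul_assoc, hMP, htr]
  have hstar : (traceRepresenter c q P)ᴴ = ((c + q : ℝ) : ℂ) • P - (q : ℂ) • (Pᵀ * P) := by
    rw [traceRepresenter, conjTranspose_sub, conjTranspose_smul, conjTranspose_smul, hherm,
      conjTranspose_mul_transpose_self hP]
    simp
  rw [transposeForm_eq, hstar]
  simp only [Matrix.sub_mul, Matrix.smul_mul, trace_sub, trace_smul, smul_eq_mul, hPM, htr, htr',
    Matrix.mul_assoc Pᵀ P M]
  push_cast
  ring

lemma trace_traceRepresenter [DecidableEq ι] (P : Matrix ι ι ℂ) :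
    (traceRepresenter c q P).trace =
      Fintype.card ι * q + P.trace * (c - q) - q * ((1 - P) * (1 - P)ᵀ).trace := by
  rw [trace_one_sub_mul_transpose, traceRepresenter, trace_sub, trace_smul, trace_smul,
    smul_eq_mul, smul_eq_mul]
  push_cast
  ring

lemma re_trace_traceRepresenter_le (hq : 0 ≤ q) (hsub : 0 ≤ c - q) {P : Matrix ι ι ℂ}
    (hP : IsStarProjection P) (hrank : P.rank ≤ k) :
    (traceRepresenter c q P).trace.re ≤ Fintype.card ι * q + k * (c - q) := by
  classical
  have hcompl := (Complex.le_def.1 (trace_mul_transpose_nonneg hP.one_sub)).1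
  have hk : (P.rank : ℝ) * (c - q) ≤ k * (c - q) := by gcongr
  have htrace : (traceRepresenter c q P).trace.re = Fintype.card ι * q + P.rank * (c - q) -
      q * ((1 - P) * (1 - P)ᵀ).trace.re := by
    rw [trace_traceRepresenter, trace_eq_rank_of_isIdempotentElem hP.isIdempotentElem]
    simp
  rw [htrace]
  linarith [mul_nonneg hq hcompl]

theorem mul_norm_trace_sq_le_of_rank_le (hq : 0 ≤ q) (hsub : 0 ≤ c - q) {M : Matrix ι ι ℂ}
    (hM : M.rank ≤ k) :
    c * (c + q) * ‖M.trace‖ ^ 2 ≤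
      (Fintype.card ι * q + k * (c - q)) * (transposeForm c q M M).re := by
  classical
  have hadd : 0 ≤ c + q := by linarith
  have hM0 : 0 ≤ (transposeForm c q M M).re :=
    (Complex.le_def.1 (transposeForm_self_nonneg hadd hsub M)).1
  obtain ⟨P, hP, hPM, hrank⟩ := exists_isStarProjection_mul_eq_self M
  set W := traceRepresenter c q P
  have hW : (W.trace).re ≤ Fintype.card ι * q + k * (c - q) :=
    re_trace_traceRepresenter_le hq hsub hP (hrank.trans_le hM)
  have hκ : 0 ≤ c * (c + q) := mul_nonneg (by linarith) hadd
  rcases hκ.eq_or_lt with hκ | hκ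
  · rw [← hκ, zero_mul]
    have : (0 : ℝ) ≤ k * (c - q) := by positivity
    positivity
  have hcs := norm_transposeForm_sq_le hadd hsub W M
  rw [transposeForm_traceRepresenter hP.isSelfAdjoint hPM,
    transposeForm_traceRepresenter hP.isSelfAdjoint (mul_traceRepresenter hP.isIdempotentElem),
    ← Complex.ofReal_add, ← Complex.ofReal_mul, norm_mul, Complex.norm_of_nonneg hκ.le,
    Complex.re_ofReal_mul] at hcs
  refine le_of_mul_le_mul_left ?_ hκ
  calc c * (c + q) * (c * (c + q) * ‖M.trace‖ ^ 2) = (c * (c + q) * ‖M.trace‖) ^ 2 := by ring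
    _ ≤ c * (c + q) * W.trace.re * (transposeForm c q M M).re := hcs
    _ = c * (c + q) * (W.trace.re * (transposeForm c q M M).re) := by ring
    _ ≤ _ := by gcongr

end TransposeForm

section ChoiForm

variable {ι : Type*} [Fintype ι] {c p q : ℝ} {k : ℕ}

/-- The Hermitian form of the Choi matrix of `Z ↦ c Tr(Z) 1 + p Z + q Zᵀ`, evaluated at the
vectorization of `M`. -/
def choiForm (c p q : ℝ) (M : Matrix ι ι ℂ) : ℝ :=
  (transposeForm c q M M).re + p * ‖M.trace‖ ^ 2

theorem choiForm_nonneg_of_rank_le (hadd : 0 ≤ c + q) (hsub : 0 ≤ c - q)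
    (hdiag : 0 ≤ c + q + k * p)
    (htrace : 0 ≤ c * (c + q) + p * (Fintype.card ι * q + k * (c - q)))
    {M : Matrix ι ι ℂ} (hM : M.rank ≤ k) : 0 ≤ choiForm c p q M := by
  have hform {c q : ℝ} (hadd : 0 ≤ c + q) (hsub : 0 ≤ c - q) : 0 ≤ (transposeForm c q M M).re :=
    (Complex.le_def.1 (transposeForm_self_nonneg hadd hsub M)).1
  have hT := hform hadd hsub
  unfold choiForm
  rcases le_or_gt 0 p with hp | hp
  · positivity
  rcases lt_or_ge 0 q with hq | hq
  · have hκ : 0 < c * (c + q) := by nlinarith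
    have hbound := mul_le_mul_of_nonpos_left (mul_norm_trace_sq_le_of_rank_le hq.le hsub hM) hp.le
    refine nonneg_of_mul_nonneg_right ?_ hκ
    linarith [mul_nonneg htrace hT]
  · have hdecomp : (transposeForm c q M M).re =
        (transposeForm (-q) q M M).re + (c + q) * (transposeForm 1 0 M M).re := by
      rw [← Complex.re_ofReal_mul, ← Complex.add_re]
      congr 1
      simp only [transposeForm_eq]
      push_cast
      ring
    have hanti : 0 ≤ (transposeForm (-q) q M M).re := hform (by simp) (by linarith)
    have hgram : 0 ≤ (transposeForm 1 0 M M).re := hform (by simp) (by simp)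
    have hbound := mul_norm_trace_sq_le_of_rank_le (c := 1) (q := 0) le_rfl (by simp) hM
    simp only [add_zero, sub_zero, mul_one, mul_zero, one_mul, zero_add] at hbound
    linarith [mul_nonneg hdiag hgram, mul_le_mul_of_nonpos_left hbound hp.le]

lemma choiForm_single_add_single [DecidableEq ι] {a b : ι} (hab : a ≠ b) (ε : ℝ) :
    choiForm c p q (single a b 1 + single b a (ε : ℂ)) = c * (1 + ε ^ 2) + q * (2 * ε) := by
  set M : Matrix ι ι ℂ := single a b 1 + single b a (ε : ℂ) with hM
  have htrace : M.trace = 0 := by simp [hM, hab, hab.symm]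
  have hgram : (Mᴴ * M).trace = ((1 + ε ^ 2 : ℝ) : ℂ) := by
    simp [hM, Matrix.add_mul, Matrix.mul_add, hab, hab.symm, sq]
  have hswap : (Mᴴ * Mᵀ).trace = ((2 * ε : ℝ) : ℂ) := by
    simp [hM, Matrix.add_mul, Matrix.mul_add, hab, hab.symm, two_mul]
  rw [choiForm, transposeForm_eq, htrace, hgram, hswap, ← Complex.ofReal_mul,
    ← Complex.ofReal_mul, ← Complex.ofReal_add, Complex.ofReal_re]
  simp

lemma choiForm_diagonal_indicator [DecidableEq ι] (s : Finset ι) :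
    choiForm c p q (diagonal fun i => if i ∈ s then (1 : ℂ) else 0) =
      s.card * (c + q + s.card * p) := by
  set P : Matrix ι ι ℂ := diagonal fun i => if i ∈ s then 1 else 0 with hP
  have htranspose : Pᵀ = P := diagonal_transpose _
  have hgram : Pᴴ * P = P := by simp [hP, diagonal_conjTranspose]
  have htrace : P.trace = s.card := by simp [hP, trace_diagonal]
  rw [choiForm, transposeForm_eq, htranspose, hgram, htrace, ← add_mul, ← Complex.ofReal_add,
    Complex.re_ofReal_mul, Complex.natCast_re, Complex.norm_natCast]
  ring

-- The rows of `V` are `e_j + i f_j` for `2 n` distinct standard basis vectors `e_j`, `f_j`.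
lemma exists_isotropic_frame {n : ℕ} (hn : 2 * n ≤ Fintype.card ι) :
    ∃ V : Matrix (Fin n) ι ℂ, V * Vᴴ = (2 : ℂ) • 1 ∧ V * Vᵀ = 0 := by
  classical
  obtain ⟨e⟩ : Nonempty (Fin n ⊕ Fin n ↪ ι) :=
    Function.Embedding.nonempty_of_card_le (by simpa [two_mul] using hn)
  let A (f : Fin n → ι) : Matrix (Fin n) ι ℂ := (1 : Matrix ι ι ℂ).submatrix f id
  have hA (f g : Fin n → ι) : A f * (A g)ᵀ = (1 : Matrix ι ι ℂ).submatrix f g := by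
    rw [transpose_submatrix, transpose_one, ← submatrix_mul _ _ f id g Function.bijective_id,
      Matrix.one_mul]
  have hreal (f : Fin n → ι) : (A f)ᴴ = (A f)ᵀ := by
    rw [conjTranspose_submatrix, conjTranspose_one, transpose_submatrix, transpose_one]
  have hll : A (e ∘ .inl) * (A (e ∘ .inl))ᵀ = 1 := by
    rw [hA, submatrix_one _ (e.injective.comp Sum.inl_injective)]
  have hrr : A (e ∘ .inr) * (A (e ∘ .inr))ᵀ = 1 := by
    rw [hA, submatrix_one _ (e.injective.comp Sum.inr_injective)]
  have hlr : A (e ∘ .inl) * (A (e ∘ .inr))ᵀ = 0 := by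
    rw [hA]
    ext i j
    simp
  have hrl : A (e ∘ .inr) * (A (e ∘ .inl))ᵀ = 0 := by
    rw [← transpose_eq_zero, transpose_mul, transpose_transpose, hlr]
  refine ⟨A (e ∘ .inl) + Complex.I • A (e ∘ .inr), ?_, ?_⟩
  · simp only [conjTranspose_add, conjTranspose_smul, hreal, Matrix.add_mul, Matrix.mul_add,
      Matrix.smul_mul, Matrix.mul_smul, hll, hrr, hlr, hrl]
    simp [two_smul, smul_smul]
  · simp only [transpose_add, transpose_smul, Matrix.add_mul, Matrix.mul_add,
      Matrix.smul_mul, Matrix.mul_smul, hll, hrr, hlr, hrl]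
    simp [smul_smul]

lemma exists_isStarProjection_mul_transpose_eq_zero {n : ℕ} (hn : 2 * n ≤ Fintype.card ι) :
    ∃ Q : Matrix ι ι ℂ, IsStarProjection Q ∧ Q * Qᵀ = 0 ∧ Q.trace = n := by
  obtain ⟨V, hV, hVT⟩ := exists_isotropic_frame hn
  refine ⟨(2⁻¹ : ℂ) • (Vᴴ * V), ⟨?_, ?_⟩, ?_, ?_⟩
  · rw [IsIdempotentElem, Matrix.smul_mul, Matrix.mul_smul, Matrix.mul_assoc, ← Matrix.mul_assoc V,
      hV]
    simp [smul_smul]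
  · rw [IsSelfAdjoint, star_smul, star_eq_conjTranspose, conjTranspose_mul,
      conjTranspose_conjTranspose]
    simp
  · rw [transpose_smul, transpose_mul, Matrix.smul_mul, Matrix.mul_smul, Matrix.mul_assoc,
      ← Matrix.mul_assoc V, hVT]
    simp
  · rw [trace_smul, trace_mul_comm, hV]
    simp

-- Isotropy of the complement makes `re_trace_traceRepresenter_le` an equality, so the representer
-- itself is extremal for Cauchy–Schwarz.
theorem exists_rank_le_choiForm_eq (hk : k ≤ Fintype.card ι)
    (hcard : Fintype.card ι ≤ 2 * k) (c p q : ℝ) :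
    ∃ M : Matrix ι ι ℂ, M.rank ≤ k ∧
      choiForm c p q M = (Fintype.card ι * q + k * (c - q)) *
        (c * (c + q) + p * (Fintype.card ι * q + k * (c - q))) := by
  classical
  obtain ⟨Q, hQ, hQT, hQtr⟩ := exists_isStarProjection_mul_transpose_eq_zero (ι := ι)
    (n := Fintype.card ι - k) (by omega)
  have hP := hQ.one_sub
  have htrace : (1 - Q).trace = k := by
    rw [trace_sub, trace_one, hQtr, Nat.cast_sub hk, sub_sub_cancel]
  have hrank : (1 - Q).rank = k := by
    exact_mod_cast (trace_eq_rank_of_isIdempotentElem hP.isIdempotentElem).symm.trans htrace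
  have hfixed := mul_traceRepresenter (c := c) (q := q) hP.isIdempotentElem
  refine ⟨traceRepresenter c q (1 - Q), ?_, ?_⟩
  · rw [← hfixed, ← hrank]
    exact rank_mul_le_left _ _
  · have htr : (traceRepresenter c q (1 - Q)).trace =
        ((Fintype.card ι * q + k * (c - q) : ℝ) : ℂ) := by
      rw [trace_traceRepresenter, sub_sub_cancel, hQT, htrace]
      simp
    rw [choiForm, transposeForm_traceRepresenter hP.isSelfAdjoint hfixed, htr, Complex.norm_real,
      Real.norm_eq_abs, sq_abs, ← Complex.ofReal_add, ← Complex.ofReal_mul, ← Complex.ofReal_mul,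
      Complex.ofReal_re]
    ring

theorem forall_choiForm_nonneg_iff (hk2 : 2 ≤ k) (hk : k ≤ Fintype.card ι)
    (hcard : Fintype.card ι ≤ 2 * k) :
    (∀ M : Matrix ι ι ℂ, M.rank ≤ k → 0 ≤ choiForm c p q M) ↔
      0 ≤ c + q ∧ 0 ≤ c - q ∧ 0 ≤ c + q + k * p ∧
        0 ≤ c * (c + q) + p * (Fintype.card ι * q + k * (c - q)) := by
  classical
  constructor
  · intro hform
    obtain ⟨a, b, hab⟩ := Fintype.exists_pair_of_one_lt_card (by omega : 1 < Fintype.card ι)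
    have hswap (ε : ℝ) : 0 ≤ c * (1 + ε ^ 2) + q * (2 * ε) := by
      rw [← choiForm_single_add_single hab]
      exact hform _ ((rank_single_add_single_le _ _ _ _).trans hk2)
    have hadd : 0 ≤ c + q := by linarith [hswap 1]
    have hsub : 0 ≤ c - q := by linarith [hswap (-1)]
    refine ⟨hadd, hsub, ?_, ?_⟩
    · obtain ⟨s, -, hs⟩ := Finset.exists_subset_card_eq (s := Finset.univ) (n := k) hk
      have hrank : (diagonal fun i => if i ∈ s then (1 : ℂ) else 0).rank ≤ k := by
        rw [rank_diagonal, ← hs]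
        simp
      have hdiag := hform _ hrank
      rw [choiForm_diagonal_indicator, hs] at hdiag
      exact nonneg_of_mul_nonneg_right hdiag (by positivity)
    · obtain ⟨M, hM, hMform⟩ := exists_rank_le_choiForm_eq hk hcard c p q
      have hdisc := hform M hM
      rw [hMform] at hdisc
      have hu : 0 ≤ Fintype.card ι * q + k * (c - q) := by
        have : (Fintype.card ι : ℝ) ≤ 2 * k := by exact_mod_cast hcard
        linarith [mul_nonneg (Nat.cast_nonneg (α := ℝ) (Fintype.card ι)) hadd,
          mul_nonneg (sub_nonneg.2 this) hsub]
      rcases hu.eq_or_lt with hu | hu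
      · rw [← hu, mul_zero, add_zero]
        exact mul_nonneg (by linarith) hadd
      · exact nonneg_of_mul_nonneg_right hdisc hu
  · rintro ⟨hadd, hsub, hdiag, htrace⟩ M hM
    exact choiForm_nonneg_of_rank_le hadd hsub hdiag htrace hM

end ChoiForm

section Lmap

variable {d k : ℕ} {p q : ℝ}

lemma choiMatrix_Lmap_apply (e a f b : Fin d) :
    choiMatrix (Lmap d p q) (e, a) (f, b) =
      (if e = f then if a = b then (((1 - p - q) / d : ℝ) : ℂ) else 0 else 0) +
        (if e = a then if f = b then (p : ℂ) else 0 else 0) +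
        (if f = a then if e = b then (q : ℂ) else 0 else 0) := by
  rcases eq_or_ne e f with rfl | hef
  · simp [choiMatrix, Lmap, single_apply, one_apply, ite_and]
  · simp [choiMatrix, Lmap, single_apply, ite_and, hef]

lemma choiMatrix_Lmap_mulVec_vec (M : Matrix (Fin d) (Fin d) ℂ) :
    choiMatrix (Lmap d p q) *ᵥ vec M =
      vec ((((1 - p - q) / d : ℝ) : ℂ) • M + ((p : ℂ) * M.trace) • 1 + (q : ℂ) • Mᵀ) := by
  ext ⟨e, a⟩
  simp only [mulVec, dotProduct, Fintype.sum_prod_type, choiMatrix_Lmap_apply, vec, add_mul,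
    ite_mul, zero_mul, Finset.sum_add_distrib]
  simp [one_apply, trace, Finset.mul_sum, eq_comm (a := e)]

lemma star_vec_dotProduct_choiMatrix_Lmap (M : Matrix (Fin d) (Fin d) ℂ) :
    star (vec M) ⬝ᵥ (choiMatrix (Lmap d p q) *ᵥ vec M) = choiForm ((1 - p - q) / d) p q M := by
  have hreal (c : ℝ) : (((transposeForm c q M M).re : ℝ) : ℂ) = transposeForm c q M M :=
    Complex.conj_eq_iff_re.1 (star_transposeForm c q M M)
  rw [choiMatrix_Lmap_mulVec_vec, add_right_comm, star_vec_dotProduct_vec, Matrix.mul_add,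
    trace_add, choiForm, Complex.ofReal_add, hreal]
  congr 1
  simp [mul_assoc, Complex.mul_conj']

theorem isKPositive_Lmap_iff_choiForm :
    IsKPositive k (Lmap d p q) ↔
      ∀ M : Matrix (Fin d) (Fin d) ℂ, M.rank ≤ k → 0 ≤ choiForm ((1 - p - q) / d) p q M := by
  simp only [isKPositive_iff_choiMatrix, star_vec_dotProduct_choiMatrix_Lmap, Complex.zero_le_real]

theorem Lmap_kPositive_iff_large_general (hk2 : 2 ≤ k) (hkd : k ≤ d) (hdk : d ≤ 2 * k) (p q : ℝ) :
    IsKPositive k (Lmap d p q) ↔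
      (p - ((d : ℝ) - 1) * q ≤ 1 ∧ p + ((d : ℝ) + 1) * q ≤ 1 ∧
        -1 ≤ ((k : ℝ) * d - 1) * p + ((d : ℝ) - 1) * q ∧
        ((k : ℝ) * d - 1) * p ^ 2
            - ((d : ℝ) ^ 3 - (k : ℝ) * d ^ 2 - (k : ℝ) * d - d + 2) * p * q
            + ((d : ℝ) - 1) * q ^ 2 - ((k : ℝ) * d - 2) * p - ((d : ℝ) - 2) * q - 1 ≤ 0) := by
  have hd : (0 : ℝ) < d := by exact_mod_cast (by omega : 0 < d)
  rw [isKPositive_Lmap_iff_choiForm, forall_choiForm_nonneg_iff hk2 (by simpa) (by simpa),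
    Fintype.card_fin]
  have hnorm : d * ((1 - p - q) / d) + p + q = 1 := by
    rw [mul_div_cancel₀ _ hd.ne']
    ring
  generalize (1 - p - q) / d = c at hnorm ⊢
  have hadd : 1 - (p - ((d : ℝ) - 1) * q) = d * (c + q) := by linear_combination -hnorm
  have hsub : 1 - (p + ((d : ℝ) + 1) * q) = d * (c - q) := by linear_combination -hnorm
  have hdiag : ((k : ℝ) * d - 1) * p + ((d : ℝ) - 1) * q - -1 = d * (c + q + k * p) := by
    linear_combination -hnorm
  have htrace : -(((k : ℝ) * d - 1) * p ^ 2
      - ((d : ℝ) ^ 3 - (k : ℝ) * d ^ 2 - (k : ℝ) * d - d + 2) * p * q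
      + ((d : ℝ) - 1) * q ^ 2 - ((k : ℝ) * d - 2) * p - ((d : ℝ) - 2) * q - 1) =
      (d : ℝ) ^ 2 * (c * (c + q) + p * (d * q + k * (c - q))) := by
    obtain rfl : p = 1 - d * c - q := by linarith
    ring
  rw [← sub_nonneg (b := p - _), hadd, ← sub_nonneg (b := p + _), hsub, ← sub_nonneg (b := -1),
    hdiag, ← neg_nonneg, htrace]
  simp only [mul_nonneg_iff_of_pos_left hd, mul_nonneg_iff_of_pos_left (pow_pos hd 2)]

end Lmap

/-- For `d ≥ 3` and an integer `k` with `d/2 < k < d`, the map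
`L^{(d)}_{p,q}` is `k`-positive iff `p - (d-1)q ≤ 1`, `p + (d+1)q ≤ 1`,
`(kd-1)p + (d-1)q ≥ -1` and `f_k(p,q) ≤ 0`, where
`f_k(x,y) = (kd-1)x² - (d³-kd²-kd-d+2)xy + (d-1)y² - (kd-2)x - (d-2)y - 1`. -/
theorem Lmap_kPositive_iff_large {d k : ℕ} (hd : 3 ≤ d) (hk : d < 2 * k) (hkd : k < d)
    (p q : ℝ) :
    IsKPositive k (Lmap d p q) ↔
      (p - ((d : ℝ) - 1) * q ≤ 1 ∧ p + ((d : ℝ) + 1) * q ≤ 1 ∧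
        -1 ≤ ((k : ℝ) * d - 1) * p + ((d : ℝ) - 1) * q ∧
        ((k : ℝ) * d - 1) * p ^ 2
            - ((d : ℝ) ^ 3 - (k : ℝ) * d ^ 2 - (k : ℝ) * d - d + 2) * p * q
            + ((d : ℝ) - 1) * q ^ 2 - ((k : ℝ) * d - 2) * p - ((d : ℝ) - 2) * q - 1 ≤ 0) :=
  Lmap_kPositive_iff_large_general (by omega) hkd.le hk.le p q

end
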